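/- Let H²_β be a weighted Hardy space of polynomial growth, and let h₁, h₂ be analytic on an open neighborhood of the closed unit disk, with {M_{h₁}}' = {M_{h₂}}' = {M_z}' as subalgebras of bounded operators on H²_β. Then M_{h₁} is similar to M_{h₂} on H²_β if and only if there exists an analytic automorphism φ ∈ Aut(𝔻) such that h₂ = h₁ ∘ φ. -/

import Mathlib

noncomputable section

open Complex Filter Topology

/-- The sequence-space (ℓ²) model of a weighted Hardy space `H²_β`.
An element `a : H2` represents the analytic function whose `k`-th Taylor
coefficient is `a k / β k` (so that `‖a‖` is exactly the `H²_β`-norm). -/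
abbrev H2 : Type := lp (fun _ : ℕ => ℂ) 2

/-- The direct sum (ℓ²-sense) of `m` copies of `H2`. -/
abbrev Hm (m : ℕ) : Type := PiLp 2 (fun _ : Fin m => H2)

/-- The open unit disk 𝔻 ⊆ ℂ. -/
def unitDisk : Set ℂ := Metric.ball 0 1

/-- `β_0 = 1` and `β_k = ∏_{j=1}^k w_j`. -/
def betaSeq (w : ℕ → ℝ) (k : ℕ) : ℝ := ∏ j ∈ Finset.Icc 1 k, w j

/-- The analytic function on 𝔻 represented by the vector `a` in the model of `H²_β`:
`f(z) = ∑_k (a k / β k) z^k`. -/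
def repFun (β : ℕ → ℝ) (a : H2) (z : ℂ) : ℂ := ∑' k, (a k / (β k : ℂ)) * z ^ k

/-- `T` is (the ℓ²-model of) the multiplication operator `M_g` on `H²_β`.
Existence of such a `T` says precisely that `M_g` is bounded on `H²_β`. -/
def RepMul (β : ℕ → ℝ) (g : ℂ → ℂ) (T : H2 →L[ℂ] H2) : Prop :=
  ∀ a : H2, ∀ z ∈ unitDisk, repFun β (T a) z = g z * repFun β a z

/-- `T` is (the ℓ²-model of) the composition operator `C_ψ` on `H²_β`.
Existence of such a `T` says precisely that `C_ψ` is bounded on `H²_β`. -/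
def RepComp (β : ℕ → ℝ) (ψ : ℂ → ℂ) (T : H2 →L[ℂ] H2) : Prop :=
  ∀ a : H2, ∀ z ∈ unitDisk, repFun β (T a) z = repFun β a (ψ z)

/-- The Möbius factor `φ_{z₀}(z) = (z₀ - z)/(1 - conj z₀ · z)`. -/
def mobius (z₀ z : ℂ) : ℂ := (z₀ - z) / (1 - (starRingEnd ℂ) z₀ * z)

/-- `φ` belongs to `Aut(𝔻)`, i.e. `φ(z) = e^{iθ}(z₀ - z)/(1 - conj z₀ · z)`. -/
def IsDiskAut (φ : ℂ → ℂ) : Prop :=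
  ∃ (θ : ℝ) (z₀ : ℂ), z₀ ∈ unitDisk ∧
    ∀ z, φ z = Complex.exp (θ * Complex.I) * mobius z₀ z

/-- `B` is a finite Blaschke product of order `m`. -/
def IsBlaschke (m : ℕ) (B : ℂ → ℂ) : Prop :=
  ∃ (θ : ℝ) (zs : Fin m → ℂ), (∀ j, zs j ∈ unitDisk) ∧
    ∀ z, B z = Complex.exp (θ * Complex.I) * ∏ j, mobius (zs j) z

/-- `w` is a positive weight sequence tending to `1` such that the weighted Hardy
space `H²_β` is of polynomial growth: `sup_k (k+1)|w_k - 1| < ∞`. -/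
def PolyGrowth (w : ℕ → ℝ) : Prop :=
  (∀ k, 1 ≤ k → 0 < w k) ∧ Tendsto w atTop (nhds 1) ∧
    ∃ M : ℝ, ∀ k : ℕ, 1 ≤ k → ((k : ℝ) + 1) * |w k - 1| ≤ M

/-- `f` is analytic on an open neighbourhood of the closed unit disk. -/
def AnalyticOnClosedDisk (f : ℂ → ℂ) : Prop :=
  ∃ U : Set ℂ, IsOpen U ∧ Metric.closedBall (0:ℂ) 1 ⊆ U ∧ AnalyticOnNhd ℂ f U

/-- The commutant of a bounded operator on `H2`. -/
def commutant (A : H2 →L[ℂ] H2) : Set (H2 →L[ℂ] H2) := {T | T * A = A * T}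

/-!
If `X` intertwines `M_{h₁}` and `M_{h₂}`, it conjugates one commutant onto the other, and both are
the commutant of `M_z`. So `X M_z X⁻¹` is multiplication by some `φ`, and `X` is the weighted
composition operator `f ↦ X 1 · (f ∘ φ)`. The same holds for `X⁻¹`, which makes `φ` an automorphism;
since `X 1` has no zeros, comparing the two multiplication operators gives `h₂ = h₁ ∘ φ`.

Conversely, it is enough that `C_φ` is bounded on `H²_β` for every `φ ∈ Aut(𝔻)`. The adjoint of
`C_φ` sends the reproducing kernel at `z` to the one at `φ z`, so one has to compare the norms of
`∑ i, c i • k_{z_i}` and `∑ i, c i • k_{φ z_i}`. The points are moved along a path of automorphisms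
obeying a Riccati equation `μ' = u - conj u * μ ^ 2`. Along it the `k`-th coordinate only exchanges
energy with its neighbours, and the polynomial growth of the weight bounds the total gain by a
multiple of the energy; Grönwall's inequality concludes.
-/

open scoped ComplexConjugate UnitDisc

section DiskAutomorphisms

lemma mem_unitDisk {z : ℂ} : z ∈ unitDisk ↔ ‖z‖ < 1 := by
  simp only [unitDisk, mem_ball_zero_iff]

lemma coe_mem_unitDisk (z : 𝔻) : (z : ℂ) ∈ unitDisk := mem_unitDisk.2 z.norm_lt_one

lemma one_sub_conj_mul_ne_zero (a z : 𝔻) : 1 - conj (a : ℂ) * z ≠ 0 :=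
  sub_ne_zero.2 (star a * z).coe_ne_one.symm

lemma normSq_one_sub_conj_mul_sub_normSq_sub (a z : ℂ) :
    normSq (1 - conj a * z) - normSq (a - z) = (1 - normSq a) * (1 - normSq z) := by
  simp only [normSq_apply, sub_re, sub_im, mul_re, mul_im, conj_re, conj_im, one_re, one_im]
  ring

lemma norm_mobius_lt_one (a z : 𝔻) : ‖mobius a z‖ < 1 := by
  have normSq_lt_one (u : 𝔻) : normSq u < 1 := by
    rw [normSq_eq_norm_sq, sq_lt_one_iff₀ (norm_nonneg _)]
    exact u.norm_lt_one
  have hpos := mul_pos (sub_pos.2 (normSq_lt_one a)) (sub_pos.2 (normSq_lt_one z))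
  rw [← normSq_one_sub_conj_mul_sub_normSq_sub, sub_pos] at hpos
  rw [← sq_lt_one_iff₀ (norm_nonneg _), ← normSq_eq_norm_sq, mobius, map_div₀, div_lt_one]
  · exact hpos
  · exact normSq_pos.2 (one_sub_conj_mul_ne_zero a z)

/-- The Möbius factor `φ_a` as a self-map of the disk. -/
def mobiusDisc (a z : 𝔻) : 𝔻 := .mk (mobius a z) (norm_mobius_lt_one a z)

lemma mobius_mobius (a z : 𝔻) : mobius a (mobius a z) = z := by
  have hdiv : mobius a z * (1 - conj (a : ℂ) * z) = a - z :=
    div_mul_cancel₀ _ (one_sub_conj_mul_ne_zero a z)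
  have hne : 1 - conj (a : ℂ) * mobius a z ≠ 0 := one_sub_conj_mul_ne_zero a (mobiusDisc a z)
  rw [mobius, div_eq_iff hne]
  linear_combination -hdiv

lemma mobius_zero_right (a : ℂ) : mobius a 0 = a := by simp [mobius]

lemma differentiableOn_mobius (a : 𝔻) : DifferentiableOn ℂ (mobius a) unitDisk := by
  refine DifferentiableOn.div (by fun_prop) (by fun_prop) fun z hz => ?_
  lift z to 𝔻 using mem_unitDisk.1 hz
  exact one_sub_conj_mul_ne_zero a z

lemma mapsTo_mobius (a : 𝔻) : Set.MapsTo (mobius a) unitDisk unitDisk := fun z hz => by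
  lift z to 𝔻 using mem_unitDisk.1 hz
  exact coe_mem_unitDisk (mobiusDisc a z)

lemma invOn_mobius (a : 𝔻) : Set.InvOn (mobius a) (mobius a) unitDisk unitDisk := by
  have h : Set.LeftInvOn (mobius a) (mobius a) unitDisk := fun z hz => by
    lift z to 𝔻 using mem_unitDisk.1 hz
    exact mobius_mobius a z
  exact ⟨h, h⟩

/-- The Schwarz lemma, applied to `F` and to its inverse. -/
lemma exists_eqOn_const_mul_of_leftInvOn {F G : ℂ → ℂ} (hF : DifferentiableOn ℂ F unitDisk)
    (hG : DifferentiableOn ℂ G unitDisk) (mF : Set.MapsTo F unitDisk unitDisk)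
    (mG : Set.MapsTo G unitDisk unitDisk) (hGF : Set.LeftInvOn G F unitDisk) (hF0 : F 0 = 0) :
    ∃ q : ℂ, ‖q‖ = 1 ∧ Set.EqOn F (fun z => q * z) unitDisk := by
  have hball : unitDisk ⊆ Metric.closedBall 0 1 := Metric.ball_subset_closedBall
  have hG0 : G 0 = 0 := by
    simpa only [hF0] using hGF (mem_unitDisk.2 (norm_zero.trans_lt one_pos))
  have half_mem : (1 / 2 : ℂ) ∈ unitDisk := mem_unitDisk.2 (by norm_num)
  have hle : ‖F (1 / 2)‖ ≤ ‖(1 / 2 : ℂ)‖ :=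
    norm_le_norm_of_mapsTo_ball hF (mF.mono_right hball) hF0 (mem_unitDisk.1 half_mem)
  have hge : ‖G (F (1 / 2))‖ ≤ ‖F (1 / 2)‖ :=
    norm_le_norm_of_mapsTo_ball hG (mG.mono_right hball) hG0 (mem_unitDisk.1 (mF half_mem))
  rw [hGF half_mem] at hge
  have hslope : ‖dslope F 0 (1 / 2)‖ = 1 / 1 := by
    rw [dslope_of_ne _ (by norm_num), slope_def_field, hF0, sub_zero, sub_zero, norm_div,
      hle.antisymm hge, div_self (by norm_num), div_one]
  obtain ⟨q, hq, hFq⟩ := affine_of_mapsTo_ball_of_exists_norm_dslope_eq_div' hF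
    (hF0.symm ▸ mF.mono_right hball) ⟨1 / 2, half_mem, hslope⟩
  refine ⟨q, by simpa only [div_one] using hq, fun z hz => ?_⟩
  simp only [hFq hz, hF0, zero_add, sub_zero, smul_eq_mul, mul_comm]

lemma isDiskAut_mul_mobius {q : ℂ} (hq : ‖q‖ = 1) (a : 𝔻) :
    IsDiskAut fun z => q * mobius a z := by
  obtain ⟨θ, rfl⟩ := (norm_eq_one_iff q).1 hq
  exact ⟨θ, a, coe_mem_unitDisk a, fun _ => rfl⟩

lemma exists_isDiskAut_eqOn {φ ψ : ℂ → ℂ} (hφ : DifferentiableOn ℂ φ unitDisk)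
    (hψ : DifferentiableOn ℂ ψ unitDisk) (mφ : Set.MapsTo φ unitDisk unitDisk)
    (mψ : Set.MapsTo ψ unitDisk unitDisk) (hinv : Set.InvOn ψ φ unitDisk unitDisk) :
    ∃ φ' : ℂ → ℂ, IsDiskAut φ' ∧ Set.EqOn φ φ' unitDisk := by
  have zero_mem : (0 : ℂ) ∈ unitDisk := coe_mem_unitDisk 0
  obtain ⟨a, ha⟩ : ∃ a : 𝔻, (a : ℂ) = ψ 0 := ⟨.mk (ψ 0) (mem_unitDisk.1 (mψ zero_mem)), rfl⟩
  have hF0 : φ (mobius a 0) = 0 := by rw [mobius_zero_right, ha, hinv.2 zero_mem]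
  obtain ⟨q, hq, hφq⟩ := exists_eqOn_const_mul_of_leftInvOn
    (hφ.comp (differentiableOn_mobius a) (mapsTo_mobius a))
    ((differentiableOn_mobius a).comp hψ mψ) (mφ.comp (mapsTo_mobius a))
    ((mapsTo_mobius a).comp mψ) ((invOn_mobius a).1.comp hinv.1 (mapsTo_mobius a)) hF0
  refine ⟨_, isDiskAut_mul_mobius hq a, fun z hz => ?_⟩
  simpa only [Function.comp_apply, (invOn_mobius a).1 hz] using hφq (mapsTo_mobius a hz)

lemma IsDiskAut.exists_eq_mul_mobius {φ : ℂ → ℂ} (hφ : IsDiskAut φ) :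
    ∃ q : ℂ, ‖q‖ = 1 ∧ ∃ a : 𝔻, φ = fun z => q * mobius a z := by
  obtain ⟨θ, a, ha, h⟩ := hφ
  lift a to 𝔻 using mem_unitDisk.1 ha
  exact ⟨_, norm_exp_ofReal_mul_I θ, a, funext h⟩

lemma mul_mem_unitDisk_of_norm_eq_one {q : ℂ} (hq : ‖q‖ = 1) {z : ℂ} (hz : z ∈ unitDisk) :
    q * z ∈ unitDisk := by
  rwa [mem_unitDisk, norm_mul, hq, one_mul, ← mem_unitDisk]

lemma IsDiskAut.mapsTo {φ : ℂ → ℂ} (hφ : IsDiskAut φ) : Set.MapsTo φ unitDisk unitDisk := by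
  obtain ⟨q, hq, a, rfl⟩ := hφ.exists_eq_mul_mobius
  exact fun z hz => mul_mem_unitDisk_of_norm_eq_one hq (mapsTo_mobius a hz)

lemma IsDiskAut.exists_invOn {φ : ℂ → ℂ} (hφ : IsDiskAut φ) :
    ∃ ψ, IsDiskAut ψ ∧ Set.InvOn ψ φ unitDisk unitDisk := by
  obtain ⟨q, hq, a, rfl⟩ := hφ.exists_eq_mul_mobius
  have hqc : ‖conj q‖ = 1 := by rw [norm_conj, hq]
  have hqq : conj q * q = 1 := by rw [conj_mul', hq, ofReal_one, one_pow]
  let b : 𝔻 := .mk (q * a)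
    (mem_unitDisk.1 (mul_mem_unitDisk_of_norm_eq_one hq (coe_mem_unitDisk a)))
  have hψ (z : ℂ) : conj q * mobius b z = mobius a (conj q * z) := by
    have hnum : conj q * (q * a - z) = a - conj q * z := by linear_combination (a : ℂ) * hqq
    have hden : 1 - conj (q * a) * z = 1 - conj (a : ℂ) * (conj q * z) := by rw [map_mul]; ring
    simp only [mobius, b, UnitDisc.coe_mk, ← mul_div_assoc, hnum, hden]
  refine ⟨_, isDiskAut_mul_mobius hqc b, fun z hz => ?_, fun z hz => ?_⟩
  · simp only [hψ]
    rw [← mul_assoc, hqq, one_mul, (invOn_mobius a).1 hz]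
  · simp only [hψ]
    rw [(invOn_mobius a).1 (mul_mem_unitDisk_of_norm_eq_one hqc hz), ← mul_assoc, mul_comm q, hqq,
      one_mul]

end DiskAutomorphisms

section FunctionModel

/-- A positive sequence whose consecutive ratios tend to `1`; the power series of every vector of
the model then converges on the whole disk. -/
structure IsDiskWeight (β : ℕ → ℝ) : Prop where
  pos : ∀ k, 0 < β k
  tendsto_ratio : Tendsto (fun k => β (k + 1) / β k) atTop (𝓝 1)

namespace IsDiskWeight

variable {β γ : ℕ → ℝ}

lemma ofReal_ne_zero (hβ : IsDiskWeight β) (k : ℕ) : (β k : ℂ) ≠ 0 :=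
  Complex.ofReal_ne_zero.2 (hβ.pos k).ne'

lemma mul (hβ : IsDiskWeight β) (hγ : IsDiskWeight γ) : IsDiskWeight fun k => β k * γ k where
  pos k := mul_pos (hβ.pos k) (hγ.pos k)
  tendsto_ratio := by
    simpa only [mul_div_mul_comm, mul_one] using hβ.tendsto_ratio.mul hγ.tendsto_ratio

lemma inv (hβ : IsDiskWeight β) : IsDiskWeight fun k => (β k)⁻¹ where
  pos k := inv_pos.2 (hβ.pos k)
  tendsto_ratio := by
    simpa only [inv_div_inv, inv_div, inv_one] using hβ.tendsto_ratio.inv₀ one_ne_zero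

lemma natCast_add_one : IsDiskWeight fun k => (k : ℝ) + 1 where
  pos k := k.cast_add_one_pos
  tendsto_ratio := by
    have h : Tendsto (fun k : ℕ => 1 + 1 / ((k : ℝ) + 1)) atTop (𝓝 (1 + 0)) :=
      tendsto_one_div_add_atTop_nhds_zero_nat.const_add 1
    rw [add_zero] at h
    refine h.congr fun k => ?_
    rw [one_add_div k.cast_add_one_pos.ne', Nat.cast_add_one]

lemma summable_mul_pow (hβ : IsDiskWeight β) {r : ℝ} (hr0 : 0 ≤ r) (hr1 : r < 1) :
    Summable fun k => β k * r ^ k := by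
  obtain ⟨l, hrl, hl1⟩ := exists_between hr1
  have hratio : ∀ᶠ k in atTop, β (k + 1) / β k * r ≤ l :=
    (hβ.tendsto_ratio.mul_const r).eventually_le_const (by rwa [one_mul])
  refine summable_of_ratio_norm_eventually_le hl1 (hratio.mono fun k hk => ?_)
  have hterm (j : ℕ) : 0 ≤ β j * r ^ j := mul_nonneg (hβ.pos j).le (pow_nonneg hr0 j)
  rw [Real.norm_of_nonneg (hterm _), Real.norm_of_nonneg (hterm _)]
  calc β (k + 1) * r ^ (k + 1) = β (k + 1) / β k * r * (β k * r ^ k) := by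
        have := (hβ.pos k).ne'
        field_simp
        ring
    _ ≤ l * (β k * r ^ k) := by gcongr; exact hterm k

lemma tendsto_mul_pow (hβ : IsDiskWeight β) {r : ℝ} (hr0 : 0 ≤ r) (hr1 : r < 1) :
    Tendsto (fun k => β k * r ^ k) atTop (𝓝 0) :=
  (hβ.summable_mul_pow hr0 hr1).tendsto_atTop_zero

end IsDiskWeight

variable {β : ℕ → ℝ}

lemma memℓp_conj_pow_div (hβ : IsDiskWeight β) (z : 𝔻) :
    Memℓp (E := fun _ : ℕ => ℂ) (fun k => conj (z : ℂ) ^ k / β k) 2 := by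
  refine memℓp_gen ?_
  have hz : ‖(z : ℂ)‖ ^ 2 < 1 := (sq_lt_one_iff₀ (norm_nonneg _)).2 z.norm_lt_one
  refine ((hβ.inv.mul hβ.inv).summable_mul_pow (sq_nonneg _) hz).congr fun k => ?_
  simp only [ENNReal.toReal_ofNat, Real.rpow_two, norm_div, norm_pow, norm_conj, norm_real,
    Real.norm_of_nonneg (hβ.pos k).le]
  ring

/-- The reproducing kernel of `H²_β` at `z`: `⟪kernelVec hβ z, a⟫` is the value at `z` of the
function represented by `a`. -/
def kernelVec (hβ : IsDiskWeight β) (z : 𝔻) : H2 := ⟨_, memℓp_conj_pow_div hβ z⟩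

lemma kernelVec_apply (hβ : IsDiskWeight β) (z : 𝔻) (k : ℕ) :
    kernelVec hβ z k = conj (z : ℂ) ^ k / β k := rfl

lemma hasSum_inner_kernelVec (hβ : IsDiskWeight β) (z : 𝔻) (a : H2) :
    HasSum (fun k => a k / β k * (z : ℂ) ^ k) (inner ℂ (kernelVec hβ z) a) := by
  refine (lp.hasSum_inner (kernelVec hβ z) a).congr_fun fun k => ?_
  rw [kernelVec_apply, RCLike.inner_apply, map_div₀, map_pow, conj_conj, conj_ofReal]
  ring

lemma inner_kernelVec (hβ : IsDiskWeight β) (z : 𝔻) (a : H2) :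
    inner ℂ (kernelVec hβ z) a = repFun β a z :=
  (hasSum_inner_kernelVec hβ z a).tsum_eq.symm

lemma hasSum_repFun (hβ : IsDiskWeight β) (z : 𝔻) (a : H2) :
    HasSum (fun k => a k / β k * (z : ℂ) ^ k) (repFun β a z) :=
  inner_kernelVec hβ z a ▸ hasSum_inner_kernelVec hβ z a

lemma repFun_smul (c : ℂ) (a : H2) (z : ℂ) : repFun β (c • a) z = c * repFun β a z := by
  simp only [repFun, lp.coeFn_smul, Pi.smul_apply, smul_eq_mul, mul_div_assoc, mul_assoc,
    tsum_mul_left]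

lemma hasFPowerSeriesOnBall_repFun (hβ : IsDiskWeight β) (a : H2) :
    HasFPowerSeriesOnBall (repFun β a)
      (FormalMultilinearSeries.ofScalars ℂ fun k => a k / (β k : ℂ)) 0 1 := by
  refine ⟨ENNReal.le_of_forall_nnreal_lt fun r hr => ?_, one_pos, fun {z} hz => ?_⟩
  · let z : 𝔻 := .mk (r : ℝ) (by simpa using hr)
    refine FormalMultilinearSeries.le_radius_of_summable _ ?_
    simpa [z, FormalMultilinearSeries.ofScalars_norm] using (hasSum_repFun hβ z a).summable.norm
  · lift z to 𝔻 using by simpa [← ofReal_norm] using hz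
    simpa [FormalMultilinearSeries.ofScalars_apply_eq, mul_comm] using hasSum_repFun hβ z a

lemma differentiableOn_repFun (hβ : IsDiskWeight β) (a : H2) :
    DifferentiableOn ℂ (repFun β a) unitDisk := by
  simpa only [unitDisk, ← Metric.eball_ofReal, ENNReal.ofReal_one] using
    (hasFPowerSeriesOnBall_repFun hβ a).differentiableOn

lemma ext_repFun (hβ : IsDiskWeight β) {a b : H2}
    (h : Set.EqOn (repFun β a) (repFun β b) unitDisk) : a = b := by
  have hball : unitDisk ∈ 𝓝 (0 : ℂ) := Metric.ball_mem_nhds 0 one_pos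
  have hcoeff := (hasFPowerSeriesOnBall_repFun hβ a).hasFPowerSeriesAt.eq_formalMultilinearSeries
    ((hasFPowerSeriesOnBall_repFun hβ b).hasFPowerSeriesAt.congr (h.symm.eventuallyEq_of_mem hball))
  ext k
  exact (div_left_inj' (hβ.ofReal_ne_zero k)).1
    (congrFun (FormalMultilinearSeries.ofScalars_series_injective ℂ ℂ hcoeff) k)

/-- The vector representing `z ↦ z ^ k`. -/
def monomialVec (β : ℕ → ℝ) (k : ℕ) : H2 := lp.single 2 k (β k : ℂ)

lemma repFun_monomialVec (hβ : IsDiskWeight β) (k : ℕ) (z : ℂ) :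
    repFun β (monomialVec β k) z = z ^ k := by
  rw [repFun, tsum_eq_single k fun j hj => ?_]
  · rw [monomialVec, lp.single_apply_self, div_self (hβ.ofReal_ne_zero k), one_mul]
  · rw [monomialVec, lp.single_apply_ne _ _ _ hj, zero_div, zero_mul]

lemma norm_monomialVec (hβ : IsDiskWeight β) (k : ℕ) : ‖monomialVec β k‖ = β k := by
  rw [monomialVec, lp.norm_single (by norm_num), norm_real, Real.norm_of_nonneg (hβ.pos k).le]

lemma hasSum_monomialVec (hβ : IsDiskWeight β) (a : H2) :
    HasSum (fun k => (a k / (β k : ℂ)) • monomialVec β k) a := by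
  refine (lp.hasSum_single (by norm_num) a).congr_fun fun k => ?_
  rw [monomialVec, ← lp.single_smul, smul_eq_mul, div_mul_cancel₀ _ (hβ.ofReal_ne_zero k)]

end FunctionModel

section SimilarityToAutomorphism

variable {β : ℕ → ℝ}

lemma RepMul.apply_monomialVec (hβ : IsDiskWeight β) {Tz : H2 →L[ℂ] H2}
    (hTz : RepMul β (fun z => z) Tz) (k : ℕ) : Tz (monomialVec β k) = monomialVec β (k + 1) :=
  ext_repFun hβ fun z hz => by
    rw [hTz _ z hz, repFun_monomialVec hβ, repFun_monomialVec hβ, pow_succ']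

section Eigenfunctional

variable {L : H2 →L[ℂ] ℂ} {μ : ℂ}

lemma apply_monomialVec_of_apply_mul (hβ : IsDiskWeight β) {Tz : H2 →L[ℂ] H2}
    (hTz : RepMul β (fun z => z) Tz) (hL : ∀ a, L (Tz a) = μ * L a) (k : ℕ) :
    L (monomialVec β k) = μ ^ k * L (monomialVec β 0) := by
  induction k with
  | zero => rw [pow_zero, one_mul]
  | succ k ih => rw [← hTz.apply_monomialVec hβ, hL, ih, pow_succ', mul_assoc]

lemma hasSum_apply_of_apply_monomialVec (hβ : IsDiskWeight β)
    (hL : ∀ k, L (monomialVec β k) = μ ^ k * L (monomialVec β 0)) (a : H2) :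
    HasSum (fun k => a k / β k * μ ^ k * L (monomialVec β 0)) (L a) := by
  refine ((hasSum_monomialVec hβ a).mapL L).congr_fun fun k => ?_
  rw [map_smul, hL k, smul_eq_mul, mul_assoc]

lemma apply_eq_mul_repFun (hβ : IsDiskWeight β) {z : 𝔻}
    (hL : ∀ k, L (monomialVec β k) = (z : ℂ) ^ k * L (monomialVec β 0)) (a : H2) :
    L a = L (monomialVec β 0) * repFun β a z := by
  rw [mul_comm]
  exact (hasSum_apply_of_apply_monomialVec hβ hL a).unique ((hasSum_repFun hβ z a).mul_right _)

/-- If `1 < ‖μ‖`, then `‖L (monomialVec β 0)‖ ≤ ‖L‖ * β k / ‖μ‖ ^ k`, which tends to `0`. -/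
lemma norm_le_one_of_apply_monomialVec (hβ : IsDiskWeight β) (hL0 : L ≠ 0)
    (hL : ∀ k, L (monomialVec β k) = μ ^ k * L (monomialVec β 0)) : ‖μ‖ ≤ 1 := by
  by_contra! hμ
  refine hL0 (ContinuousLinearMap.ext fun a => ?_)
  have hbound (k : ℕ) : ‖L (monomialVec β 0)‖ ≤ ‖L‖ * (β k * ‖μ‖⁻¹ ^ k) := by
    have h := L.le_opNorm (monomialVec β k)
    rw [hL, norm_mul, norm_pow, norm_monomialVec hβ] at h
    rw [inv_pow, ← mul_assoc, ← div_eq_mul_inv, le_div_iff₀' (by positivity)]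
    exact h
  have hlim := (hβ.tendsto_mul_pow (by positivity) (inv_lt_one_of_one_lt₀ hμ)).const_mul ‖L‖
  rw [mul_zero] at hlim
  have hL1 : L (monomialVec β 0) = 0 := norm_le_zero_iff.1 (ge_of_tendsto' hlim hbound)
  have hsum := hasSum_apply_of_apply_monomialVec hβ hL a
  simp only [hL1, mul_zero] at hsum
  exact hsum.unique hasSum_zero

end Eigenfunctional

lemma repMul_of_mem_commutant (hβ : IsDiskWeight β) {Tz S : H2 →L[ℂ] H2}
    (hTz : RepMul β (fun z => z) Tz) (hS : S ∈ commutant Tz) :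
    RepMul β (repFun β (S (monomialVec β 0))) S := by
  intro a z hz
  lift z to 𝔻 using mem_unitDisk.1 hz
  have hL (a : H2) : (innerSL ℂ (kernelVec hβ z) ∘L S) (Tz a) =
      z * (innerSL ℂ (kernelVec hβ z) ∘L S) a := by
    have hcomm : S (Tz a) = Tz (S a) := DFunLike.congr_fun hS a
    simp only [ContinuousLinearMap.comp_apply, innerSL_apply_apply, inner_kernelVec, hcomm]
    exact hTz _ z hz
  simpa only [ContinuousLinearMap.comp_apply, innerSL_apply_apply, inner_kernelVec] using
    apply_eq_mul_repFun hβ (apply_monomialVec_of_apply_mul hβ hTz hL) a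

lemma RepMul.ne_smul_id (hβ : IsDiskWeight β) {Tz : H2 →L[ℂ] H2}
    (hTz : RepMul β (fun z => z) Tz) (c : ℂ) : Tz ≠ c • ContinuousLinearMap.id ℂ H2 := by
  rintro rfl
  have hcoord := congrArg (fun a : H2 => a 1) (hTz.apply_monomialVec hβ 0)
  have hzero : (0 : ℂ) = β 1 := by simpa [monomialVec] using hcoord
  exact hβ.ofReal_ne_zero 1 hzero.symm

/-- `X` is the weighted composition operator `f ↦ u · (f ∘ φ)`. -/
def RepWeightedComp (β : ℕ → ℝ) (u φ : ℂ → ℂ) (X : H2 →L[ℂ] H2) : Prop :=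
  ∀ a : H2, ∀ z ∈ unitDisk, repFun β (X a) z = u z * repFun β a (φ z)

section Conjugation

variable {Tz : H2 →L[ℂ] H2} {X : H2 ≃L[ℂ] H2} {φ : ℂ → ℂ}

lemma kernelVec_comp_apply_monomialVec (hβ : IsDiskWeight β) (hTz : RepMul β (fun z => z) Tz)
    (hX : RepMul β φ (X.conjContinuousAlgEquiv Tz)) (z : 𝔻) (k : ℕ) :
    (innerSL ℂ (kernelVec hβ z) ∘L X) (monomialVec β k) =
      φ z ^ k * (innerSL ℂ (kernelVec hβ z) ∘L X) (monomialVec β 0) := by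
  refine apply_monomialVec_of_apply_mul hβ hTz (fun a => ?_) k
  simpa [inner_kernelVec] using hX (X a) z (coe_mem_unitDisk z)

lemma norm_le_one_of_repMul_conj (hβ : IsDiskWeight β) (hTz : RepMul β (fun z => z) Tz)
    (hX : RepMul β φ (X.conjContinuousAlgEquiv Tz)) (z : 𝔻) : ‖φ z‖ ≤ 1 := by
  refine norm_le_one_of_apply_monomialVec hβ (fun h0 => ?_)
    (kernelVec_comp_apply_monomialVec hβ hTz hX z)
  have h := DFunLike.congr_fun h0 (X.symm (monomialVec β 0))
  simp [inner_kernelVec, repFun_monomialVec hβ] at h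

/-- By the maximum principle a symbol reaching the circle is constant, and then so is `M_z`. -/
lemma mapsTo_of_repMul_conj (hβ : IsDiskWeight β) (hTz : RepMul β (fun z => z) Tz)
    (hX : RepMul β φ (X.conjContinuousAlgEquiv Tz)) (hφ : DifferentiableOn ℂ φ unitDisk) :
    Set.MapsTo φ unitDisk unitDisk := by
  have hle : ∀ z ∈ unitDisk, ‖φ z‖ ≤ 1 := fun z hz => by
    lift z to 𝔻 using mem_unitDisk.1 hz
    exact norm_le_one_of_repMul_conj hβ hTz hX z
  intro z hz
  refine mem_unitDisk.2 ((hle z hz).lt_of_ne fun hz1 => ?_)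
  have hconst : Set.EqOn φ (fun _ => φ z) unitDisk :=
    eqOn_of_isPreconnected_of_isMaxOn_norm (convex_ball (0 : ℂ) 1).isPreconnected
      Metric.isOpen_ball hφ hz fun y hy => (hle y hy).trans_eq hz1.symm
  have hscalar (a : H2) : X (Tz a) = X (φ z • a) := ext_repFun hβ fun y hy => by
    rw [map_smul, repFun_smul]
    simpa [hconst hy] using hX (X a) y hy
  exact hTz.ne_smul_id hβ (φ z) (ContinuousLinearMap.ext fun a => X.injective (hscalar a))

lemma repWeightedComp_of_repMul_conj (hβ : IsDiskWeight β) (hTz : RepMul β (fun z => z) Tz)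
    (hX : RepMul β φ (X.conjContinuousAlgEquiv Tz)) (mφ : Set.MapsTo φ unitDisk unitDisk) :
    RepWeightedComp β (repFun β (X (monomialVec β 0))) φ X := by
  intro a z hz
  obtain ⟨y, hy⟩ : ∃ y : 𝔻, (y : ℂ) = φ z := ⟨.mk (φ z) (mem_unitDisk.1 (mφ hz)), rfl⟩
  lift z to 𝔻 using mem_unitDisk.1 hz
  have hL := kernelVec_comp_apply_monomialVec hβ hTz hX z
  rw [← hy] at hL ⊢
  simpa [inner_kernelVec] using apply_eq_mul_repFun hβ hL a

end Conjugation

lemma conj_mem_commutant {X : H2 ≃L[ℂ] H2} {A B S : H2 →L[ℂ] H2}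
    (hX : ∀ a, X (A a) = B (X a)) (hS : S ∈ commutant A) :
    X.conjContinuousAlgEquiv S ∈ commutant B := by
  have hB : B = X.conjContinuousAlgEquiv A := ContinuousLinearMap.ext fun a => by simp [hX]
  have hcomm : S * A = A * S := hS
  change _ * B = B * _
  rw [hB, ← map_mul, hcomm, map_mul]

lemma exists_repWeightedComp (hβ : IsDiskWeight β) {A B Tz : H2 →L[ℂ] H2} {X : H2 ≃L[ℂ] H2}
    (hTz : RepMul β (fun z => z) Tz) (hA : Tz ∈ commutant A) (hB : commutant B ⊆ commutant Tz)
    (hX : ∀ a, X (A a) = B (X a)) :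
    ∃ u φ : ℂ → ℂ, DifferentiableOn ℂ φ unitDisk ∧ Set.MapsTo φ unitDisk unitDisk ∧
      RepWeightedComp β u φ X := by
  have hφ := repMul_of_mem_commutant hβ hTz (hB (conj_mem_commutant hX hA))
  have dφ := differentiableOn_repFun hβ (X.conjContinuousAlgEquiv Tz (monomialVec β 0))
  have mφ := mapsTo_of_repMul_conj hβ hTz hφ dφ
  exact ⟨_, _, dφ, mφ, repWeightedComp_of_repMul_conj hβ hTz hφ mφ⟩

lemma RepWeightedComp.mul_eq_mul_comp (hβ : IsDiskWeight β) {u φ h₁ h₂ : ℂ → ℂ}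
    {X T₁ T₂ : H2 →L[ℂ] H2} (hφ : RepWeightedComp β u φ X) (hT₁ : RepMul β h₁ T₁)
    (hT₂ : RepMul β h₂ T₂) (mφ : Set.MapsTo φ unitDisk unitDisk) (hX : ∀ a, X (T₁ a) = T₂ (X a))
    {z : ℂ} (hz : z ∈ unitDisk) : u z * h₂ z = u z * h₁ (φ z) := by
  have hone (y : ℂ) : repFun β (monomialVec β 0) y = 1 := by
    rw [repFun_monomialVec hβ, pow_zero]
  calc u z * h₂ z = h₂ z * repFun β (X (monomialVec β 0)) z := by
        rw [hφ _ z hz, hone, mul_one, mul_comm]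
    _ = repFun β (X (T₁ (monomialVec β 0))) z := by rw [hX, hT₂ _ z hz]
    _ = u z * h₁ (φ z) := by rw [hφ _ z hz, hT₁ _ _ (mφ hz), hone, mul_one]

section InverseWeightedComp

variable {u v φ ψ : ℂ → ℂ} {X Y : H2 →L[ℂ] H2}

lemma RepWeightedComp.mul_eq_one (hβ : IsDiskWeight β) (hX : RepWeightedComp β u φ X)
    (hY : RepWeightedComp β v ψ Y) (mφ : Set.MapsTo φ unitDisk unitDisk)
    (hXY : ∀ a, X (Y a) = a) {z : ℂ} (hz : z ∈ unitDisk) : u z * v (φ z) = 1 := by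
  have h := hX (Y (monomialVec β 0)) z hz
  rw [hXY, hY _ _ (mφ hz)] at h
  simpa [repFun_monomialVec hβ] using h.symm

lemma RepWeightedComp.leftInvOn (hβ : IsDiskWeight β) (hX : RepWeightedComp β u φ X)
    (hY : RepWeightedComp β v ψ Y) (mφ : Set.MapsTo φ unitDisk unitDisk)
    (hXY : ∀ a, X (Y a) = a) : Set.LeftInvOn ψ φ unitDisk := by
  intro z hz
  have h := hX (Y (monomialVec β 1)) z hz
  rw [hXY, hY _ _ (mφ hz), ← mul_assoc, hX.mul_eq_one hβ hY mφ hXY hz] at h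
  simpa [repFun_monomialVec hβ] using h.symm

end InverseWeightedComp

theorem exists_isDiskAut_of_similar (hβ : IsDiskWeight β) {h₁ h₂ : ℂ → ℂ}
    {T₁ T₂ Tz : H2 →L[ℂ] H2} (hT₁ : RepMul β h₁ T₁) (hT₂ : RepMul β h₂ T₂)
    (hTz : RepMul β (fun z => z) Tz) (hc₁ : commutant T₁ = commutant Tz)
    (hc₂ : commutant T₂ = commutant Tz) {X : H2 ≃L[ℂ] H2} (hX : ∀ a, X (T₁ a) = T₂ (X a)) :
    ∃ φ : ℂ → ℂ, IsDiskAut φ ∧ ∀ z ∈ unitDisk, h₂ z = h₁ (φ z) := by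
  have hX' (a : H2) : X.symm (T₂ a) = T₁ (X.symm a) := by
    rw [X.symm_apply_eq, hX, X.apply_symm_apply]
  have hself : Tz ∈ commutant Tz := rfl
  obtain ⟨u, φ, dφ, mφ, hφ⟩ := exists_repWeightedComp hβ hTz (hc₁ ▸ hself) hc₂.subset hX
  obtain ⟨v, ψ, dψ, mψ, hψ⟩ := exists_repWeightedComp hβ hTz (hc₂ ▸ hself) hc₁.subset hX'
  have hinv : Set.InvOn ψ φ unitDisk unitDisk :=
    ⟨hφ.leftInvOn hβ hψ mφ X.apply_symm_apply, hψ.leftInvOn hβ hφ mψ X.symm_apply_apply⟩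
  obtain ⟨φ', hφ', heq⟩ := exists_isDiskAut_eqOn dφ dψ mφ mψ hinv
  refine ⟨φ', hφ', fun z hz => ?_⟩
  rw [← heq hz]
  have hu : u z ≠ 0 := left_ne_zero_of_mul_eq_one (hφ.mul_eq_one hβ hψ mφ X.apply_symm_apply hz)
  exact mul_left_cancel₀ hu (hφ.mul_eq_mul_comp hβ hT₁ hT₂ mφ hX hz)

end SimilarityToAutomorphism

section PolynomialGrowth

/-- Polynomial growth of `H²_β`, expressed through the ratios `w_{k+1} = β_{k+1} / β_k`. The first
value `β 0` is an arbitrary positive number. -/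
structure IsPolyGrowthWeight (β : ℕ → ℝ) : Prop where
  pos : ∀ k, 0 < β k
  exists_bound : ∃ M : ℝ, ∀ k : ℕ, ((k : ℝ) + 1) * |β (k + 1) / β k - 1| ≤ M

lemma betaSeq_succ_div {w : ℕ → ℝ} (hw : ∀ k, 1 ≤ k → 0 < w k) (k : ℕ) :
    betaSeq w (k + 1) / betaSeq w k = w (k + 1) := by
  have hne : betaSeq w k ≠ 0 :=
    Finset.prod_ne_zero_iff.2 fun j hj => (hw j (Finset.mem_Icc.1 hj).1).ne'
  rw [betaSeq, Finset.prod_Icc_succ_top (by omega), ← betaSeq, mul_div_cancel_left₀ _ hne]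

lemma PolyGrowth.isPolyGrowthWeight {w : ℕ → ℝ} (hw : PolyGrowth w) :
    IsPolyGrowthWeight (betaSeq w) where
  pos _ := Finset.prod_pos fun j hj => hw.1 j (Finset.mem_Icc.1 hj).1
  exists_bound := by
    obtain ⟨M, hM⟩ := hw.2.2
    refine ⟨M, fun k => ?_⟩
    rw [betaSeq_succ_div hw.1]
    refine le_trans ?_ (hM (k + 1) (by omega))
    gcongr
    omega

namespace IsPolyGrowthWeight

variable {β : ℕ → ℝ}

lemma isDiskWeight (hβ : IsPolyGrowthWeight β) : IsDiskWeight β where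
  pos := hβ.pos
  tendsto_ratio := by
    obtain ⟨M, hM⟩ := hβ.exists_bound
    rw [tendsto_iff_dist_tendsto_zero]
    have hlim := (tendsto_one_div_add_atTop_nhds_zero_nat (𝕜 := ℝ)).const_mul M
    rw [mul_zero] at hlim
    refine squeeze_zero (fun _ => dist_nonneg) (fun k => ?_) hlim
    rw [Real.dist_eq, mul_one_div, le_div_iff₀' k.cast_add_one_pos]
    exact hM k

lemma exists_abs_div_ratio_sub_mul_ratio_le (hβ : IsPolyGrowthWeight β) :
    ∃ C, ∀ k : ℕ, |((k : ℝ) + 1) / (β (k + 1) / β k) - k * (β (k + 1) / β k)| ≤ C := by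
  have hratio := hβ.isDiskWeight.tendsto_ratio
  have hdefect : (fun k : ℕ => ((k : ℝ) + 1) * (β (k + 1) / β k - 1)) =O[atTop]
      (fun _ => (1 : ℝ)) := by
    obtain ⟨M, hM⟩ := hβ.exists_bound
    refine Asymptotics.isBigO_one_nat_atTop_iff.2 ⟨M, fun k => ?_⟩
    rw [Real.norm_eq_abs, abs_mul, abs_of_pos k.cast_add_one_pos]
    exact hM k
  have hfactor : (fun k => (1 + β (k + 1) / β k) / (β (k + 1) / β k)) =O[atTop]
      (fun _ => (1 : ℝ)) := ((hratio.const_add 1).div hratio one_ne_zero).isBigO_one ℝ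
  refine Asymptotics.isBigO_one_nat_atTop_iff.1 (((hratio.isBigO_one ℝ).sub
    ((hdefect.mul hfactor).congr_right fun _ => one_mul _)).congr_left fun k => ?_)
  have := (hβ.pos k).ne'
  have := (hβ.pos (k + 1)).ne'
  field_simp
  ring

end IsPolyGrowthWeight

end PolynomialGrowth

section BoundedExtension

lemma exists_clm_apply_eq_of_norm_linearCombination_le {𝕜 ι E F : Type*}
    [NontriviallyNormedField 𝕜] [NormedAddCommGroup E] [NormedSpace 𝕜 E] [NormedAddCommGroup F]
    [NormedSpace 𝕜 F] [CompleteSpace F] {v : ι → E} {v' : ι → F}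
    (hv : (Submodule.span 𝕜 (Set.range v)).topologicalClosure = ⊤) {K : ℝ}
    (hK : ∀ c : ι →₀ 𝕜,
      ‖Finsupp.linearCombination 𝕜 v' c‖ ≤ K * ‖Finsupp.linearCombination 𝕜 v c‖) :
    ∃ D : E →L[𝕜] F, ∀ i, D (v i) = v' i := by
  have hdense : DenseRange (Finsupp.linearCombination 𝕜 v) := by
    rw [DenseRange, ← LinearMap.coe_range, Finsupp.range_linearCombination,
      Submodule.dense_iff_topologicalClosure_eq_top, hv]
  refine ⟨(Finsupp.linearCombination 𝕜 v').extendOfNorm (Finsupp.linearCombination 𝕜 v),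
    fun i => ?_⟩
  simpa only [Finsupp.linearCombination_single, one_smul] using
    LinearMap.extendOfNorm_eq hdense ⟨K, hK⟩ (Finsupp.single i 1)

variable {β : ℕ → ℝ}

lemma topologicalClosure_span_kernelVec (hβ : IsDiskWeight β) :
    (Submodule.span ℂ (Set.range (kernelVec hβ))).topologicalClosure = ⊤ := by
  rw [Submodule.topologicalClosure_eq_top_iff, Submodule.eq_bot_iff]
  refine fun a ha => ext_repFun hβ fun z hz => ?_
  lift z to 𝔻 using mem_unitDisk.1 hz
  have horth := ha _ (Submodule.subset_span (Set.mem_range_self z))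
  rw [← inner_kernelVec hβ z, ← inner_kernelVec hβ z, horth, inner_zero_right]

lemma exists_repComp_of_norm_linearCombination_le (hβ : IsDiskWeight β) {ψ : ℂ → ℂ} {σ : 𝔻 → 𝔻}
    (hσ : ∀ z : 𝔻, ψ z = σ z) {K : ℝ}
    (hK : ∀ c : 𝔻 →₀ ℂ, ‖Finsupp.linearCombination ℂ (kernelVec hβ ∘ σ) c‖ ≤
      K * ‖Finsupp.linearCombination ℂ (kernelVec hβ) c‖) :
    ∃ T, RepComp β ψ T := by
  obtain ⟨D, hD⟩ := exists_clm_apply_eq_of_norm_linearCombination_le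
    (topologicalClosure_span_kernelVec hβ) hK
  refine ⟨D.adjoint, fun a z hz => ?_⟩
  lift z to 𝔻 using mem_unitDisk.1 hz
  rw [hσ, ← inner_kernelVec hβ z, ← inner_kernelVec hβ (σ z),
    ContinuousLinearMap.adjoint_inner_right, hD, Function.comp_apply]

end BoundedExtension

section PowerSums

variable {ι : Type*} {β : ℕ → ℝ}

/-- The weighted power sums `∑ i, conj (c i) * μ i ^ k`: up to the factor `1 / β k` and conjugation,
the coordinates of the combination `∑ i, c i • kernelVec (μ i)`. -/
def powSum (c : ι →₀ ℂ) (μ : ι → ℂ) (k : ℕ) : ℂ := c.sum fun i r => conj r * μ i ^ k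

lemma linearCombination_kernelVec_apply (hβ : IsDiskWeight β) (c : ι →₀ ℂ) (μ : ι → 𝔻) (k : ℕ) :
    Finsupp.linearCombination ℂ (kernelVec hβ ∘ μ) c k =
      conj (powSum c (fun i => μ i) k) / β k := by
  rw [Finsupp.linearCombination_apply, powSum, Finsupp.sum, Finsupp.sum, lp.coeFn_sum,
    Finset.sum_apply, map_sum, Finset.sum_div]
  refine Finset.sum_congr rfl fun i _ => ?_
  rw [lp.coeFn_smul, Pi.smul_apply, Function.comp_apply, kernelVec_apply, smul_eq_mul, map_mul,
    conj_conj, map_pow, mul_div_assoc]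

lemma hasSum_norm_sq_powSum (hβ : IsDiskWeight β) (c : ι →₀ ℂ) (μ : ι → 𝔻) :
    HasSum (fun k => ‖powSum c (fun i => μ i) k‖ ^ 2 / β k ^ 2)
      (‖Finsupp.linearCombination ℂ (kernelVec hβ ∘ μ) c‖ ^ 2) := by
  have h := lp.hasSum_norm (p := 2) (by norm_num) (Finsupp.linearCombination ℂ (kernelVec hβ ∘ μ) c)
  simp only [ENNReal.toReal_ofNat, Real.rpow_two] at h
  refine h.congr_fun fun k => ?_
  rw [linearCombination_kernelVec_apply, norm_div, norm_conj, norm_real,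
    Real.norm_of_nonneg (hβ.pos k).le, div_pow]

lemma norm_powSum_le {c : ι →₀ ℂ} {μ : ι → ℂ} {ρ : ℝ} (hμ : ∀ i ∈ c.support, ‖μ i‖ ≤ ρ) (k : ℕ) :
    ‖powSum c μ k‖ ≤ (c.sum fun _ r => ‖r‖) * ρ ^ k := by
  rw [powSum, Finsupp.sum, Finsupp.sum, Finset.sum_mul]
  refine norm_sum_le_of_le _ fun i hi => ?_
  rw [norm_mul, norm_conj, norm_pow]
  gcongr
  exact hμ i hi

lemma powSum_const_mul (c : ι →₀ ℂ) (q : ℂ) (μ : ι → ℂ) (k : ℕ) :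
    powSum c (fun i => q * μ i) k = q ^ k * powSum c μ k := by
  simp only [powSum, Finsupp.mul_sum, mul_pow, mul_left_comm]

lemma norm_linearCombination_kernelVec_rotate (hβ : IsDiskWeight β) {q : ℂ} (hq : ‖q‖ = 1)
    {μ μ' : ι → 𝔻} (hμ : ∀ i, (μ' i : ℂ) = q * μ i) (c : ι →₀ ℂ) :
    ‖Finsupp.linearCombination ℂ (kernelVec hβ ∘ μ') c‖ =
      ‖Finsupp.linearCombination ℂ (kernelVec hβ ∘ μ) c‖ := by
  have h := hasSum_norm_sq_powSum hβ c μ'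
  simp only [hμ, powSum_const_mul, norm_mul, norm_pow, hq, one_pow, one_mul] at h
  exact (sq_eq_sq₀ (norm_nonneg _) (norm_nonneg _)).1 (h.unique (hasSum_norm_sq_powSum hβ c μ))

end PowerSums

section EnergyEstimate

variable {β : ℕ → ℝ}

lemma sum_range_succ_mul_sub_pred {R : Type*} [CommRing R] {a : ℕ → R} (ha : a 0 = 0) (p : ℕ → R)
    (N : ℕ) : ∑ k ∈ Finset.range (N + 1), a k * (p (k - 1) - p k) =
      ∑ k ∈ Finset.range N, (a (k + 1) - a k) * p k - a N * p N := by
  induction N with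
  | zero => simp [ha]
  | succ N ih =>
    rw [Finset.sum_range_succ, ih, Finset.sum_range_succ, Nat.add_sub_cancel]
    ring

/-- The rate at which the flow `μ' = u - conj u * μ ^ 2` transports energy from the `k`-th to the
`(k + 1)`-st power sum. -/
def flux (u : ℂ) (y : ℕ → ℂ) (k : ℕ) : ℝ := 2 * (u * y k * conj (y (k + 1))).re

lemma abs_flux_le (u : ℂ) (y : ℕ → ℂ) (k : ℕ) : |flux u y k| ≤ 2 * ‖u‖ * (‖y k‖ * ‖y (k + 1)‖) := by
  have h := abs_re_le_norm (u * y k * conj (y (k + 1)))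
  rw [norm_mul, norm_mul, norm_conj] at h
  rw [flux, abs_mul, abs_two]
  linarith

section

variable {ι : Type*} {ν : ι → ℝ → ℂ} {u : ℂ} {t : ℝ}

lemma hasDerivAt_powSum (hν : ∀ i, HasDerivAt (ν i) (u - conj u * ν i t ^ 2) t) (c : ι →₀ ℂ)
    (k : ℕ) : HasDerivAt (fun s => powSum c (fun i => ν i s) k)
      (k * (u * powSum c (fun i => ν i t) (k - 1) -
        conj u * powSum c (fun i => ν i t) (k + 1))) t := by
  have hsum := HasDerivAt.fun_sum fun i (_ : i ∈ c.support) =>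
    ((hν i).pow k).const_mul (conj (c i))
  refine hsum.congr_deriv ?_
  simp only [powSum, Finsupp.sum, Finset.mul_sum, ← Finset.sum_sub_distrib]
  refine Finset.sum_congr rfl fun i _ => ?_
  cases k with
  | zero => simp
  | succ k => rw [Nat.add_sub_cancel]; ring

lemma hasDerivAt_norm_sq_powSum (hν : ∀ i, HasDerivAt (ν i) (u - conj u * ν i t ^ 2) t)
    (c : ι →₀ ℂ) (k : ℕ) : HasDerivAt (fun s => ‖powSum c (fun i => ν i s) k‖ ^ 2)
      (k * (flux u (powSum c fun i => ν i t) (k - 1) - flux u (powSum c fun i => ν i t) k)) t := by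
  refine (hasDerivAt_powSum hν c k).norm_sq.congr_deriv ?_
  rw [Complex.inner]
  cases k with
  | zero => simp
  | succ k =>
    simp only [flux, Nat.add_sub_cancel, mul_re, mul_im, sub_re, sub_im, conj_re, conj_im,
      natCast_re, natCast_im]
    ring

end

lemma abs_succ_div_sq_sub_div_sq_le {C : ℝ} (hβ : ∀ k, 0 < β k)
    (hC : ∀ k : ℕ, |((k : ℝ) + 1) / (β (k + 1) / β k) - k * (β (k + 1) / β k)| ≤ C) (k : ℕ) :
    |((k + 1 : ℕ) : ℝ) / β (k + 1) ^ 2 - k / β k ^ 2| ≤ C / (β k * β (k + 1)) := by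
  have h0 := hβ k
  have h1 := hβ (k + 1)
  have hfactor : ((k + 1 : ℕ) : ℝ) / β (k + 1) ^ 2 - k / β k ^ 2 =
      (((k : ℝ) + 1) / (β (k + 1) / β k) - k * (β (k + 1) / β k)) / (β k * β (k + 1)) := by
    push_cast
    field_simp
  rw [hfactor, abs_div, abs_of_pos (mul_pos h0 h1)]
  gcongr
  exact hC k

lemma sum_flux_le {C : ℝ} (hβ : ∀ k, 0 < β k)
    (hC : ∀ k : ℕ, |((k : ℝ) + 1) / (β (k + 1) / β k) - k * (β (k + 1) / β k)| ≤ C)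
    (u : ℂ) (y : ℕ → ℂ) (N : ℕ) :
    ∑ k ∈ Finset.range N, (((k + 1 : ℕ) : ℝ) / β (k + 1) ^ 2 - k / β k ^ 2) * flux u y k ≤
      2 * C * ‖u‖ * ∑ k ∈ Finset.range (N + 1), ‖y k‖ ^ 2 / β k ^ 2 := by
  have hC0 : 0 ≤ C := (abs_nonneg _).trans (hC 0)
  have hterm (k : ℕ) : (((k + 1 : ℕ) : ℝ) / β (k + 1) ^ 2 - k / β k ^ 2) * flux u y k ≤
      C * ‖u‖ * (‖y k‖ ^ 2 / β k ^ 2 + ‖y (k + 1)‖ ^ 2 / β (k + 1) ^ 2) := by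
    have h0 := hβ k
    have h1 := hβ (k + 1)
    calc (((k + 1 : ℕ) : ℝ) / β (k + 1) ^ 2 - k / β k ^ 2) * flux u y k
        ≤ |((k + 1 : ℕ) : ℝ) / β (k + 1) ^ 2 - k / β k ^ 2| * |flux u y k| :=
          (le_abs_self _).trans (abs_mul _ _).le
      _ ≤ C / (β k * β (k + 1)) * (2 * ‖u‖ * (‖y k‖ * ‖y (k + 1)‖)) := by
          gcongr
          · exact abs_succ_div_sq_sub_div_sq_le hβ hC k
          · exact abs_flux_le u y k
      _ = C * ‖u‖ * (2 * (‖y k‖ / β k) * (‖y (k + 1)‖ / β (k + 1))) := by ring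
      _ ≤ C * ‖u‖ * ((‖y k‖ / β k) ^ 2 + (‖y (k + 1)‖ / β (k + 1)) ^ 2) := by
          gcongr
          exact two_mul_le_add_sq _ _
      _ = _ := by rw [div_pow, div_pow]
  have hnonneg (k : ℕ) : 0 ≤ ‖y k‖ ^ 2 / β k ^ 2 := by positivity
  calc _ ≤ _ := Finset.sum_le_sum fun k _ => hterm k
    _ = C * ‖u‖ * (∑ k ∈ Finset.range N, ‖y k‖ ^ 2 / β k ^ 2 +
          ∑ k ∈ Finset.range N, ‖y (k + 1)‖ ^ 2 / β (k + 1) ^ 2) := by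
        rw [← Finset.mul_sum, Finset.sum_add_distrib]
    _ ≤ C * ‖u‖ * (∑ k ∈ Finset.range (N + 1), ‖y k‖ ^ 2 / β k ^ 2 +
          ∑ k ∈ Finset.range (N + 1), ‖y k‖ ^ 2 / β k ^ 2) := by
        gcongr
        · exact N.le_succ
        · rw [Finset.sum_range_succ']
          exact le_add_of_nonneg_right (hnonneg 0)
    _ = _ := by ring

lemma sum_natCast_mul_flux_sub_le {C : ℝ} (hβ : ∀ k, 0 < β k)
    (hC : ∀ k : ℕ, |((k : ℝ) + 1) / (β (k + 1) / β k) - k * (β (k + 1) / β k)| ≤ C)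
    (u : ℂ) (y : ℕ → ℂ) (N : ℕ) :
    ∑ k ∈ Finset.range (N + 1), k * (flux u y (k - 1) - flux u y k) / β k ^ 2 ≤
      2 * C * ‖u‖ * ∑ k ∈ Finset.range (N + 1), ‖y k‖ ^ 2 / β k ^ 2 +
        N / β N ^ 2 * (2 * ‖u‖ * (‖y N‖ * ‖y (N + 1)‖)) := by
  have habel := sum_range_succ_mul_sub_pred (a := fun k : ℕ => (k : ℝ) / β k ^ 2)
    (by rw [Nat.cast_zero, zero_div]) (flux u y) N
  have hboundary : -(N / β N ^ 2 * flux u y N) ≤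
      N / β N ^ 2 * (2 * ‖u‖ * (‖y N‖ * ‖y (N + 1)‖)) := by
    rw [← mul_neg]
    gcongr
    exact (neg_le_abs _).trans (abs_flux_le u y N)
  simp only [mul_div_right_comm]
  rw [habel, sub_eq_add_neg]
  exact add_le_add (sum_flux_le hβ hC u y N) hboundary

lemma exists_norm_lt_of_continuousOn {ι X E : Type*} [TopologicalSpace X] [NormedAddCommGroup E]
    [ProperSpace E] {K : Set X} (hK : IsCompact K) (s : Finset ι) {f : ι → X → E} {r : ℝ}
    (hr : 0 < r) (hf : ∀ i ∈ s, ContinuousOn (f i) K) (hfr : ∀ i ∈ s, ∀ x ∈ K, ‖f i x‖ < r) :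
    ∃ ρ ∈ Set.Ioo 0 r, ∀ i ∈ s, ∀ x ∈ K, ‖f i x‖ < ρ := by
  have hcompact : IsCompact (⋃ i ∈ s, f i '' K) :=
    s.isCompact_biUnion fun i hi => hK.image_of_continuousOn (hf i hi)
  obtain ⟨ρ, hρ, hsub⟩ := exists_pos_lt_subset_ball (x := 0) hr hcompact.isClosed
    (Set.iUnion₂_subset fun i hi => Set.image_subset_iff.2 fun x hx =>
      mem_ball_zero_iff.2 (hfr i hi x hx))
  exact ⟨ρ, hρ, fun i hi x hx => mem_ball_zero_iff.1
    (hsub (Set.mem_biUnion hi (Set.mem_image_of_mem _ hx)))⟩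

section RiccatiFlow

variable {ι : Type*} {ν : ι → ℝ → ℂ} {u : ℝ → ℂ} {G : ℝ}

lemma sum_norm_sq_powSum_le_gronwallBound {C ε δ : ℝ} (hβ : ∀ k, 0 < β k)
    (hC : ∀ k : ℕ, |((k : ℝ) + 1) / (β (k + 1) / β k) - k * (β (k + 1) / β k)| ≤ C)
    (hν : ∀ i, ∀ t ∈ Set.Icc (0 : ℝ) 1, HasDerivAt (ν i) (u t - conj (u t) * ν i t ^ 2) t)
    (hu : ∀ t ∈ Set.Icc (0 : ℝ) 1, ‖u t‖ ≤ G) (c : ι →₀ ℂ) (N : ℕ)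
    (hε : ∀ t ∈ Set.Icc (0 : ℝ) 1, N / β N ^ 2 * (2 * ‖u t‖ *
      (‖powSum c (fun i => ν i t) N‖ * ‖powSum c (fun i => ν i t) (N + 1)‖)) ≤ ε)
    (hδ : ∑ k ∈ Finset.range (N + 1), ‖powSum c (fun i => ν i 0) k‖ ^ 2 / β k ^ 2 ≤ δ) :
    ∑ k ∈ Finset.range (N + 1), ‖powSum c (fun i => ν i 1) k‖ ^ 2 / β k ^ 2 ≤
      gronwallBound δ (2 * C * G) ε 1 := by
  have hC0 : 0 ≤ C := (abs_nonneg _).trans (hC 0)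
  have hderiv (t : ℝ) (ht : t ∈ Set.Icc (0 : ℝ) 1) := HasDerivAt.fun_sum
    fun k (_ : k ∈ Finset.range (N + 1)) =>
      (hasDerivAt_norm_sq_powSum (fun i => hν i t ht) c k).div_const (β k ^ 2)
  have h := le_gronwallBound_of_liminf_deriv_right_le
    (fun t ht => (hderiv t ht).continuousAt.continuousWithinAt)
    (fun t ht _ => (hderiv t (Set.Ico_subset_Icc_self ht)).hasDerivWithinAt.liminf_right_slope_le)
    hδ (K := 2 * C * G) (ε := ε) (fun t ht => ?_) 1 (Set.right_mem_Icc.2 zero_le_one)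
  · rwa [sub_zero] at h
  have ht' := Set.Ico_subset_Icc_self ht
  refine (sum_natCast_mul_flux_sub_le hβ hC (u t) _ N).trans ?_
  have := hu t ht'
  have := hε t ht'
  have : 0 ≤ ∑ k ∈ Finset.range (N + 1),
    ‖powSum c (fun i => ν i t) k‖ ^ 2 / β k ^ 2 := Finset.sum_nonneg fun _ _ => by positivity
  gcongr

lemma exists_tendsto_zero_boundary_le (hβ : IsDiskWeight β) {s : Set ℝ} (hs : IsCompact s)
    (hν : ∀ i, ContinuousOn (ν i) s) (hlt : ∀ i, ∀ t ∈ s, ‖ν i t‖ < 1)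
    (hu : ∀ t ∈ s, ‖u t‖ ≤ G) (c : ι →₀ ℂ) :
    ∃ ε : ℕ → ℝ, Tendsto ε atTop (𝓝 0) ∧ ∀ N : ℕ, ∀ t ∈ s, N / β N ^ 2 * (2 * ‖u t‖ *
      (‖powSum c (fun i => ν i t) N‖ * ‖powSum c (fun i => ν i t) (N + 1)‖)) ≤ ε N := by
  obtain ⟨ρ, ⟨hρ0, hρ1⟩, hρ⟩ := exists_norm_lt_of_continuousOn hs c.support one_pos
    (fun i _ => hν i) fun i _ => hlt i
  have hlim := ((IsDiskWeight.natCast_add_one.mul (hβ.inv.mul hβ.inv)).tendsto_mul_pow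
    (sq_nonneg ρ) ((sq_lt_one_iff₀ hρ0.le).2 hρ1)).const_mul
    (2 * G * (c.sum fun _ r => ‖r‖) ^ 2)
  rw [mul_zero] at hlim
  refine ⟨_, hlim, fun N t ht => ?_⟩
  have hpow (k : ℕ) := norm_powSum_le (fun i hi => (hρ i hi t ht).le) k
  set A := c.sum fun _ r => ‖r‖
  have hA : 0 ≤ A := Finsupp.sum_nonneg fun _ _ => norm_nonneg _
  have hN := hβ.pos N
  have hG : 0 ≤ G := (norm_nonneg _).trans (hu t ht)
  calc _ ≤ (N + 1) / β N ^ 2 * (2 * G * ((A * ρ ^ N) * (A * ρ ^ N))) := by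
        have hnext : ‖powSum c (fun i => ν i t) (N + 1)‖ ≤ A * ρ ^ N :=
          (hpow (N + 1)).trans (mul_le_mul_of_nonneg_left
            (pow_le_pow_of_le_one hρ0.le hρ1.le N.le_succ) hA)
        gcongr
        · exact le_add_of_nonneg_right zero_le_one
        · exact hu t ht
        · exact hpow N
    _ = _ := by
        rw [← pow_mul]
        field_simp
        ring

/-- Grönwall for the truncated energies `∑ k ≤ N, ‖powSum c (ν t) k‖ ^ 2 / β k ^ 2`. By polynomial
growth each derivative is at most a constant multiple of the energy, up to a boundary term that
vanishes as `N → ∞` because all the points stay in a compact subset of the disk. -/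
theorem exists_norm_linearCombination_kernelVec_le (hβ : IsPolyGrowthWeight β) {μ₀ μ₁ : ι → 𝔻}
    (hν : ∀ i, ∀ t ∈ Set.Icc (0 : ℝ) 1, HasDerivAt (ν i) (u t - conj (u t) * ν i t ^ 2) t)
    (hlt : ∀ i, ∀ t ∈ Set.Icc (0 : ℝ) 1, ‖ν i t‖ < 1) (hu : ∀ t ∈ Set.Icc (0 : ℝ) 1, ‖u t‖ ≤ G)
    (h0 : ∀ i, ν i 0 = μ₀ i) (h1 : ∀ i, ν i 1 = μ₁ i) :
    ∃ K, ∀ c : ι →₀ ℂ, ‖Finsupp.linearCombination ℂ (kernelVec hβ.isDiskWeight ∘ μ₁) c‖ ≤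
      K * ‖Finsupp.linearCombination ℂ (kernelVec hβ.isDiskWeight ∘ μ₀) c‖ := by
  obtain ⟨C, hC⟩ := hβ.exists_abs_div_ratio_sub_mul_ratio_le
  refine ⟨√(Real.exp (2 * C * G)), fun c => ?_⟩
  obtain ⟨ε, hε, hboundary⟩ := exists_tendsto_zero_boundary_le hβ.isDiskWeight isCompact_Icc
    (fun i t ht => (hν i t ht).continuousAt.continuousWithinAt) hlt hu c
  have hsum₀ := hasSum_norm_sq_powSum hβ.isDiskWeight c μ₀
  have hsum₁ := (hasSum_norm_sq_powSum hβ.isDiskWeight c μ₁).tendsto_sum_nat.comp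
    (tendsto_add_atTop_nat 1)
  have hgronwall := ((gronwallBound_continuous_ε
    (‖Finsupp.linearCombination ℂ (kernelVec hβ.isDiskWeight ∘ μ₀) c‖ ^ 2) (2 * C * G) 1).tendsto
    0).comp hε
  have hsq := le_of_tendsto_of_tendsto' hsum₁ hgronwall fun N => by
    simpa only [h1] using! sum_norm_sq_powSum_le_gronwallBound hβ.pos hC hν hu c N (hboundary N)
      (by simpa only [h0] using sum_le_hasSum _ (fun _ _ => by positivity) hsum₀)
  rw [gronwallBound_ε0, mul_one, mul_comm] at hsq
  rw [← Real.sqrt_sq (norm_nonneg (Finsupp.linearCombination ℂ _ c)),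
    ← Real.sqrt_sq (norm_nonneg (Finsupp.linearCombination ℂ (kernelVec hβ.isDiskWeight ∘ μ₀) c)),
    ← Real.sqrt_mul (Real.exp_pos _).le]
  exact Real.sqrt_le_sqrt hsq

end RiccatiFlow

end EnergyEstimate

section AutomorphismToSimilarity

variable {β : ℕ → ℝ}

/-- The path in `Aut(𝔻)` from the identity at `t = 0` to `-φ_a` at `t = 1`. -/
def mobiusFlow (a z : ℂ) (t : ℝ) : ℂ := -mobius (t * a) z

lemma mobiusFlow_zero (a z : ℂ) : mobiusFlow a z 0 = z := by simp [mobiusFlow, mobius]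

lemma mobiusFlow_one (a z : ℂ) : mobiusFlow a z 1 = -mobius a z := by simp [mobiusFlow]

section

variable {t : ℝ}

lemma sq_mul_sq_norm_le (ht : t ∈ Set.Icc (0 : ℝ) 1) (a : 𝔻) :
    t ^ 2 * ‖(a : ℂ)‖ ^ 2 ≤ ‖(a : ℂ)‖ ^ 2 :=
  mul_le_of_le_one_left (sq_nonneg _) (pow_le_one₀ ht.1 ht.2)

lemma exists_coe_eq_ofReal_mul (ht : t ∈ Set.Icc (0 : ℝ) 1) (a : 𝔻) :
    ∃ b : 𝔻, (b : ℂ) = t * a := by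
  refine ⟨.mk (t * a) ?_, rfl⟩
  rw [norm_mul, norm_real, Real.norm_of_nonneg ht.1]
  exact (mul_le_of_le_one_left (norm_nonneg _) ht.2).trans_lt a.norm_lt_one

lemma norm_mobiusFlow_lt_one (ht : t ∈ Set.Icc (0 : ℝ) 1) (a z : 𝔻) :
    ‖mobiusFlow a z t‖ < 1 := by
  obtain ⟨b, hb⟩ := exists_coe_eq_ofReal_mul ht a
  rw [mobiusFlow, norm_neg, ← hb]
  exact norm_mobius_lt_one b z

lemma norm_mobiusFlow_velocity_le (ht : t ∈ Set.Icc (0 : ℝ) 1) (a : 𝔻) :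
    ‖-((1 - t ^ 2 * ‖(a : ℂ)‖ ^ 2)⁻¹ : ℝ) * (a : ℂ)‖ ≤ (1 - ‖(a : ℂ)‖ ^ 2)⁻¹ := by
  have ha : 0 < 1 - ‖(a : ℂ)‖ ^ 2 :=
    sub_pos.2 ((sq_lt_one_iff₀ (norm_nonneg _)).2 a.norm_lt_one)
  have hle := sub_le_sub_left (sq_mul_sq_norm_le ht a) 1
  rw [neg_mul, norm_neg, norm_mul, norm_real,
    Real.norm_of_nonneg (inv_nonneg.2 (ha.le.trans hle))]
  exact (mul_le_of_le_one_right (inv_nonneg.2 (ha.le.trans hle)) a.norm_lt_one.le).trans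
    (inv_anti₀ ha hle)

lemma hasDerivAt_mobiusFlow (ht : t ∈ Set.Icc (0 : ℝ) 1) (a z : 𝔻) :
    HasDerivAt (mobiusFlow a z) (-((1 - t ^ 2 * ‖(a : ℂ)‖ ^ 2)⁻¹ : ℝ) * (a : ℂ) -
      conj (-((1 - t ^ 2 * ‖(a : ℂ)‖ ^ 2)⁻¹ : ℝ) * (a : ℂ)) * mobiusFlow a z t ^ 2) t := by
  obtain ⟨b, hb⟩ := exists_coe_eq_ofReal_mul ht a
  have hden : 1 - t * conj (a : ℂ) * z ≠ 0 := by
    simpa only [hb, map_mul, conj_ofReal] using one_sub_conj_mul_ne_zero b z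
  have hγ : (1 - a * t ^ 2 * conj (a : ℂ) : ℂ) ≠ 0 := by
    have h := one_sub_conj_mul_ne_zero b b
    rw [hb, map_mul, conj_ofReal] at h
    contrapose! h
    linear_combination h
  have hid : HasDerivAt (fun s : ℝ => (s : ℂ)) 1 t := ofRealCLM.hasDerivAt
  have hflow : mobiusFlow a z = fun s : ℝ =>
      -((s * (a : ℂ) - z) / (1 - s * conj (a : ℂ) * z)) := by
    ext s
    rw [mobiusFlow, mobius, map_mul, conj_ofReal]
  have hquot := (((hid.mul_const (a : ℂ)).sub_const (z : ℂ)).fun_div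
    (((hid.mul_const (conj (a : ℂ))).mul_const (z : ℂ)).const_sub 1) hden).fun_neg
  rw [hflow]
  refine hquot.congr_deriv ?_
  simp only [map_mul, map_neg, conj_ofReal]
  push_cast
  rw [← mul_conj']
  generalize conj (a : ℂ) = a' at *
  field_simp
  ring

end

lemma IsDiskAut.exists_repComp (hβ : IsPolyGrowthWeight β) {φ : ℂ → ℂ} (hφ : IsDiskAut φ) :
    ∃ T, RepComp β φ T := by
  obtain ⟨q, hq, a, rfl⟩ := hφ.exists_eq_mul_mobius
  let τ (z : 𝔻) : 𝔻 := .mk (mobiusFlow a z 1) (norm_mobiusFlow_lt_one (by simp) a z)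
  let σ (z : 𝔻) : 𝔻 := .mk (q * mobius a z)
    (mem_unitDisk.1 (mul_mem_unitDisk_of_norm_eq_one hq (coe_mem_unitDisk (mobiusDisc a z))))
  obtain ⟨K, hK⟩ := exists_norm_linearCombination_kernelVec_le hβ (μ₀ := id) (μ₁ := τ)
    (fun z t ht => hasDerivAt_mobiusFlow ht a z) (fun z t ht => norm_mobiusFlow_lt_one ht a z)
    (fun t ht => norm_mobiusFlow_velocity_le ht a) (fun z => mobiusFlow_zero a z) fun _ => rfl
  have hστ (z : 𝔻) : (σ z : ℂ) = -q * τ z := by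
    change q * mobius a z = -q * mobiusFlow a z 1
    rw [mobiusFlow_one, neg_mul_neg]
  refine exists_repComp_of_norm_linearCombination_le hβ.isDiskWeight (σ := σ) (K := K)
    (fun _ => rfl) fun c => ?_
  rw [norm_linearCombination_kernelVec_rotate hβ.isDiskWeight (by rwa [norm_neg]) hστ]
  exact hK c

lemma RepComp.leftInverse (hβ : IsDiskWeight β) {φ ψ : ℂ → ℂ} {S T : H2 →L[ℂ] H2}
    (hS : RepComp β φ S) (hT : RepComp β ψ T) (mφ : Set.MapsTo φ unitDisk unitDisk)
    (h : Set.LeftInvOn ψ φ unitDisk) : Function.LeftInverse S T := fun a =>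
  ext_repFun hβ fun z hz => by rw [hS _ z hz, hT _ _ (mφ hz), h hz]

lemma RepComp.apply_repMul (hβ : IsDiskWeight β) {φ h₁ h₂ : ℂ → ℂ} {S T₁ T₂ : H2 →L[ℂ] H2}
    (hS : RepComp β φ S) (hT₁ : RepMul β h₁ T₁) (hT₂ : RepMul β h₂ T₂)
    (mφ : Set.MapsTo φ unitDisk unitDisk) (h : Set.EqOn h₂ (h₁ ∘ φ) unitDisk) (a : H2) :
    S (T₁ a) = T₂ (S a) := ext_repFun hβ fun z hz => by
  rw [hS _ z hz, hT₁ _ _ (mφ hz), hT₂ _ z hz, hS _ z hz, h hz, Function.comp_apply]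

theorem exists_similar_of_isDiskAut (hβ : IsPolyGrowthWeight β) {φ h₁ h₂ : ℂ → ℂ}
    {T₁ T₂ : H2 →L[ℂ] H2} (hT₁ : RepMul β h₁ T₁) (hT₂ : RepMul β h₂ T₂) (hφ : IsDiskAut φ)
    (h : Set.EqOn h₂ (h₁ ∘ φ) unitDisk) : ∃ X : H2 ≃L[ℂ] H2, ∀ a, X (T₁ a) = T₂ (X a) := by
  obtain ⟨ψ, hψ, hinv⟩ := hφ.exists_invOn
  obtain ⟨S, hS⟩ := hφ.exists_repComp hβ
  obtain ⟨R, hR⟩ := hψ.exists_repComp hβ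
  exact ⟨.equivOfInverse S R (hR.leftInverse hβ.isDiskWeight hS hψ.mapsTo hinv.2)
    (hS.leftInverse hβ.isDiskWeight hR hφ.mapsTo hinv.1),
    hS.apply_repMul hβ.isDiskWeight hT₁ hT₂ hφ.mapsTo h⟩

end AutomorphismToSimilarity

theorem statement17_general {β : ℕ → ℝ} (hβ : IsPolyGrowthWeight β) {h₁ h₂ : ℂ → ℂ}
    {T₁ T₂ Tz : H2 →L[ℂ] H2} (hT₁ : RepMul β h₁ T₁) (hT₂ : RepMul β h₂ T₂)
    (hTz : RepMul β (fun z => z) Tz) (hc₁ : commutant T₁ = commutant Tz)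
    (hc₂ : commutant T₂ = commutant Tz) :
    (∃ X : H2 ≃L[ℂ] H2, ∀ a : H2, X (T₁ a) = T₂ (X a)) ↔
      ∃ φ : ℂ → ℂ, IsDiskAut φ ∧ ∀ z ∈ unitDisk, h₂ z = h₁ (φ z) :=
  ⟨fun ⟨_, hX⟩ => exists_isDiskAut_of_similar hβ.isDiskWeight hT₁ hT₂ hTz hc₁ hc₂ hX,
    fun ⟨_, hφ, h⟩ => exists_similar_of_isDiskAut hβ hT₁ hT₂ hφ h⟩

/-- Let `H²_β` be of polynomial growth and let `h₁, h₂` be analytic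
on a neighbourhood of the closed disk with `{M_{h₁}}' = {M_{h₂}}' = {M_z}'`.  Then
`M_{h₁} ∼ M_{h₂}` on `H²_β` iff there is `φ ∈ Aut(𝔻)` with `h₂ = h₁ ∘ φ`. -/
theorem statement17 (w : ℕ → ℝ) (hw : PolyGrowth w) (h₁ h₂ : ℂ → ℂ)
    (hh₁ : AnalyticOnClosedDisk h₁) (hh₂ : AnalyticOnClosedDisk h₂)
    (T₁ T₂ Tz : H2 →L[ℂ] H2)
    (hT₁ : RepMul (betaSeq w) h₁ T₁) (hT₂ : RepMul (betaSeq w) h₂ T₂)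
    (hTz : RepMul (betaSeq w) (fun z => z) Tz)
    (hc₁ : commutant T₁ = commutant Tz) (hc₂ : commutant T₂ = commutant Tz) :
    (∃ X : H2 ≃L[ℂ] H2, ∀ a : H2, X (T₁ a) = T₂ (X a)) ↔
      ∃ φ : ℂ → ℂ, IsDiskAut φ ∧ ∀ z ∈ unitDisk, h₂ z = h₁ (φ z) :=
  statement17_general hw.isPolyGrowthWeight hT₁ hT₂ hTz hc₁ hc₂
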